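/- Let Ω = (a,b) × ℝ with a < 0 < b, and let φ : Ω → ℝ be continuously differentiable with x·φ_x(x,y) + y·φ_y(x,y) ≥ 0 on Ω (φ is star-shaped). Assume that the set Z = {(x,y) ∈ Ω : x·φ_x(x,y) + y·φ_y(x,y) = 0} does not contain any non-trivial positive semi-orbit of the system (S): ẋ = y, ẏ = −x − y·φ(x,y). Then (S) has at most one limit cycle contained in Ω, and if such a limit cycle μ of period T exists, it is hyperbolic; in fact ∫₀^T div(μ(t)) dt < 0, where div(x,y) = −φ(x,y) − y·φ_y(x,y) is the divergence of the vector field of (S). -/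

import Mathlib

open Set Filter Metric Real Topology intervalIntegral

noncomputable section

/-- `γ` solves the planar ODE with vector field `F` at every time in `s`. -/
def IsSolOn (F : ℝ × ℝ → ℝ × ℝ) (γ : ℝ → ℝ × ℝ) (s : Set ℝ) : Prop :=
  ∀ t ∈ s, HasDerivAt γ (F (γ t)) t

/-- A cycle: a non-constant `T`-periodic solution (with `T > 0`). -/
def IsCycle (F : ℝ × ℝ → ℝ × ℝ) (γ : ℝ → ℝ × ℝ) (T : ℝ) : Prop :=
  (∀ t, HasDerivAt γ (F (γ t)) t) ∧ 0 < T ∧ (∀ t, γ (t + T) = γ t) ∧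
    ∃ t₁ t₂, γ t₁ ≠ γ t₂

/-- A limit cycle: a cycle whose orbit has a neighbourhood containing no orbit
of any other cycle. -/
def IsLimitCycle (F : ℝ × ℝ → ℝ × ℝ) (γ : ℝ → ℝ × ℝ) (T : ℝ) : Prop :=
  IsCycle F γ T ∧
    ∃ U : Set (ℝ × ℝ), IsOpen U ∧ range γ ⊆ U ∧
      ∀ (γ' : ℝ → ℝ × ℝ) (T' : ℝ), IsCycle F γ' T' →
        range γ' ≠ range γ → ¬ range γ' ⊆ U

/-- There is a non-trivial positive semi-orbit of the system contained in `Z`. -/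
def HasSemiOrbitIn (F : ℝ × ℝ → ℝ × ℝ) (Z : Set (ℝ × ℝ)) : Prop :=
  ∃ (γ : ℝ → ℝ × ℝ) (t₀ : ℝ), IsSolOn F γ (Ici t₀) ∧
    (∃ t₁ ∈ Ici t₀, ∃ t₂ ∈ Ici t₀, γ t₁ ≠ γ t₂) ∧ γ '' Ici t₀ ⊆ Z

/-- There is a non-trivial (full) orbit of the system contained in `Z`. -/
def HasOrbitIn (F : ℝ × ℝ → ℝ × ℝ) (Z : Set (ℝ × ℝ)) : Prop :=
  ∃ γ : ℝ → ℝ × ℝ, (∀ t, HasDerivAt γ (F (γ t)) t) ∧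
    (∃ t₁ t₂, γ t₁ ≠ γ t₂) ∧ range γ ⊆ Z

/-- The vector field of system (S): ẋ = y, ẏ = −x − y·φ(x,y). -/
def phiVF (φ : ℝ × ℝ → ℝ) : ℝ × ℝ → ℝ × ℝ :=
  fun p => (p.2, -p.1 - p.2 * φ p)

/-!
Along a cycle the areal velocity `W = x² + y² + x y φ` satisfies
`W' = div · W + y² (x φ_x + y φ_y)`, and `W = x² > 0` where `y = 0`. Star-shapedness, Grönwall's
inequality and periodicity then give `W > 0` on the whole cycle, and integrating `(log W)'` over a
period yields `∫ div = -∫ y² (x φ_x + y φ_y) / W < 0`.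

Since `W > 0`, every cycle turns monotonically around the origin and is a graph `r = ρ θ` in polar
coordinates (logarithmic radius, clockwise angle), possibly winding several times. For two such
graphs, `φ` being monotone along rays makes `(ρ₁ - ρ₂)²` nonincreasing in `θ`, hence constant by
periodicity. Were the constant nonzero, `φ` would be constant on the ray segments joining the two
cycles, so `x φ_x + y φ_y` would vanish at the points of a cycle with `y ≠ 0`, hence by continuity
on the whole cycle, contradicting the hypothesis on `Z`.
-/

lemma mul_apply_add_mul_apply_eq {R : Type*} [CommSemiring R] [TopologicalSpace R]
    (L : R × R →L[R] R) (v : R × R) : v.1 * L (1, 0) + v.2 * L (0, 1) = L v := by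
  rw [← smul_eq_mul, ← smul_eq_mul, ← map_smul, ← map_smul, ← map_add]
  simp

lemma continuous_of_forall_hasDerivAt {E : Type*} [NormedAddCommGroup E] [NormedSpace ℝ E]
    {f f' : ℝ → E} (hf : ∀ t, HasDerivAt f (f' t) t) : Continuous f :=
  continuous_iff_continuousAt.2 fun t => (hf t).continuousAt

lemma eq_of_antitone_of_periodic {α β : Type*} [AddCommGroup α] [LinearOrder α]
    [IsOrderedAddMonoid α] [Archimedean α] [PartialOrder β] {f : α → β} {c : α}
    (hf : Antitone f) (hper : Function.Periodic f c) (hc : 0 < c) (s t : α) : f s = f t := by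
  suffices h : ∀ s t, f s ≤ f t from le_antisymm (h s t) (h t s)
  intro s t
  obtain ⟨n, hn⟩ := Archimedean.arch (t - s) hc
  calc f s = f (s + n • c) := (hper.nsmul n s).symm
    _ ≤ f t := hf (sub_le_iff_le_add'.1 hn)

-- Grönwall: `w * exp (-∫ c)` is monotone, and periodicity transports positivity backwards.
lemma pos_of_periodic_of_mul_le_deriv {w w' c : ℝ → ℝ} {T : ℝ} (hT : 0 < T)
    (hc : Continuous c) (hw : ∀ t, HasDerivAt w (w' t) t) (hle : ∀ t, c t * w t ≤ w' t)
    (hper : Function.Periodic w T) (hpos : ∃ t, 0 < w t) (t : ℝ) : 0 < w t := by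
  let μ : ℝ → ℝ := fun t => exp (-∫ u in (0 : ℝ)..t, c u)
  have hμ (t : ℝ) : HasDerivAt μ (μ t * -c t) t :=
    (hc.integral_hasStrictDerivAt 0 t).hasDerivAt.neg.exp
  have hmono : Monotone fun t => w t * μ t := by
    refine monotone_of_hasDerivAt_nonneg (fun t => (hw t).mul (hμ t)) fun t => ?_
    have : 0 ≤ (w' t - c t * w t) * μ t := mul_nonneg (sub_nonneg.2 (hle t)) (exp_pos _).le
    simp only [Pi.zero_apply]
    linarith
  obtain ⟨t₀, ht₀⟩ := hpos
  obtain ⟨n, hn⟩ := Archimedean.arch (t₀ - t) hT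
  rw [← hper.nsmul n t]
  refine pos_of_mul_pos_left ?_ (exp_pos (-∫ u in (0 : ℝ)..(t + n • T), c u)).le
  calc 0 < w t₀ * μ t₀ := mul_pos ht₀ (exp_pos _)
    _ ≤ w (t + n • T) * μ (t + n • T) := hmono (sub_le_iff_le_add'.1 hn)

lemma eq_zero_of_hasDerivAt_of_monotoneOn_uIcc {f : ℝ → ℝ} {f' a b : ℝ}
    (hf : MonotoneOn f (uIcc a b)) (hab : a ≠ b) (heq : f a = f b) (hd : HasDerivAt f f' a) :
    f' = 0 := by
  have hconst : ∀ r ∈ uIcc a b, f r = f a := by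
    intro r hr
    rcases le_total a b with h | h
    · rw [uIcc_of_le h] at hf hr
      exact ((hf hr (right_mem_Icc.2 h) hr.2).trans_eq heq.symm).antisymm
        (hf (left_mem_Icc.2 h) hr hr.1)
    · rw [uIcc_of_ge h] at hf hr
      exact (hf hr (right_mem_Icc.2 h) hr.2).antisymm
        (heq.trans_le (hf (left_mem_Icc.2 h) hr hr.1))
  have huniq : UniqueDiffWithinAt ℝ (uIcc a b) a :=
    uniqueDiffOn_Icc (inf_lt_sup.2 hab) a left_mem_uIcc
  exact huniq.eq_deriv _ hd.hasDerivWithinAt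
    ((hasDerivWithinAt_const a _ (f a)).congr hconst rfl)

lemma map_add_period_of_periodic_deriv {E : Type*} [NormedAddCommGroup E] [NormedSpace ℝ E]
    {f f' : ℝ → E} {T : ℝ} (hf : ∀ t, HasDerivAt f (f' t) t) (hper : Function.Periodic f' T)
    (t : ℝ) : f (t + T) = f t + (f T - f 0) := by
  have hd (t : ℝ) : HasDerivAt (fun t => f (t + T) - f t) 0 t := by
    simpa [hper t] using ((hf (t + T)).comp_add_const t T).fun_sub (hf t)
  have h := is_const_of_deriv_eq_zero (fun t => (hd t).differentiableAt)
    (fun t => (hd t).deriv) t 0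
  rw [zero_add] at h
  rw [← h, add_sub_cancel]

lemma surjective_of_map_add_const {f : ℝ → ℝ} {T P : ℝ} (hf : Continuous f)
    (hP : 0 < P) (hadd : ∀ t, f (t + T) = f t + P) : Function.Surjective f := by
  intro y
  let F : AddConstMap ℝ ℝ T P := ⟨f, hadd⟩
  obtain ⟨m, hm⟩ := Archimedean.arch (f 0 - y) hP
  obtain ⟨n, hn⟩ := Archimedean.arch (y - f 0) hP
  have hbelow : f (0 - m • T) = f 0 - m • P := AddConstMapClass.map_sub_nsmul F 0 m
  have habove : f (0 + n • T) = f 0 + n • P := AddConstMapClass.map_add_nsmul F 0 n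
  exact mem_range_of_exists_le_of_exists_ge hf ⟨0 - m • T, by linarith⟩ ⟨0 + n • T, by linarith⟩

lemma exists_inverse_hasDerivAt {f f' : ℝ → ℝ} (hf : ∀ t, HasDerivAt f (f' t) t)
    (hpos : ∀ t, 0 < f' t) (hsurj : Function.Surjective f) :
    ∃ g : ℝ → ℝ, Function.LeftInverse g f ∧ Function.RightInverse g f ∧
      ∀ s, HasDerivAt g (f' (g s))⁻¹ s := by
  let e : ℝ ≃o ℝ := (strictMono_of_hasDerivAt_pos hf hpos).orderIsoOfSurjective f hsurj
  have hright : Function.RightInverse e.symm f := e.apply_symm_apply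
  exact ⟨e.symm, e.symm_apply_apply, hright, fun s =>
    .of_local_left_inverse e.symm.continuous.continuousAt (hf _) (hpos _).ne' (.of_forall hright)⟩

lemma exists_complex_log_lift {z z' : ℝ → ℂ} (hz : ∀ t, HasDerivAt z (z' t) t)
    (hz' : Continuous z') (hne : ∀ t, z t ≠ 0) :
    ∃ ℓ : ℝ → ℂ, (∀ t, HasDerivAt ℓ (z' t / z t) t) ∧ ∀ t, Complex.exp (ℓ t) = z t := by
  have hcont : Continuous fun t => z' t / z t :=
    hz'.div (continuous_of_forall_hasDerivAt hz) hne
  let ℓ : ℝ → ℂ := fun t => Complex.log (z 0) + ∫ u in (0 : ℝ)..t, z' u / z u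
  have hℓ (t : ℝ) : HasDerivAt ℓ (z' t / z t) t :=
    (hcont.integral_hasStrictDerivAt 0 t).hasDerivAt.const_add _
  have hconst (t : ℝ) : HasDerivAt (fun t => z t * Complex.exp (-ℓ t)) 0 t := by
    refine ((hz t).fun_mul (hℓ t).fun_neg.cexp).congr_deriv ?_
    field_simp [hne t]
    ring
  refine ⟨ℓ, hℓ, fun t => ?_⟩
  have h := is_const_of_deriv_eq_zero (fun t => (hconst t).differentiableAt)
    (fun t => (hconst t).deriv) t 0
  have hzero : z 0 * Complex.exp (-ℓ 0) = 1 := by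
    simp [ℓ, Complex.exp_neg, Complex.exp_log (hne 0), hne 0]
  rw [hzero, Complex.exp_neg] at h
  exact (eq_of_div_eq_one h).symm

section Ray

variable {E : Type*} [NormedAddCommGroup E] [NormedSpace ℝ E] {Ω : Set E} {φ : E → ℝ}

lemma ordConnected_setOf_exp_smul_mem (hΩ : StarConvex ℝ 0 Ω) (u : E) :
    OrdConnected {r : ℝ | exp r • u ∈ Ω} := by
  refine ⟨fun _ _ s hs r hr => ?_⟩
  have h := hΩ.smul_mem hs (exp_pos (r - s)).le (exp_le_one_iff.2 (sub_nonpos.2 hr.2))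
  rwa [smul_smul, ← exp_add, sub_add_cancel] at h

lemma hasDerivAt_exp_smul {r : ℝ} {u : E} (hφ : DifferentiableAt ℝ φ (exp r • u)) :
    HasDerivAt (fun r => φ (exp r • u)) (fderiv ℝ φ (exp r • u) (exp r • u)) r :=
  hφ.hasFDerivAt.comp_hasDerivAt r ((Real.hasDerivAt_exp r).smul_const u)

lemma monotoneOn_exp_smul (hΩ : IsOpen Ω) (hΩ₀ : StarConvex ℝ 0 Ω)
    (hφ : DifferentiableOn ℝ φ Ω) (hstar : ∀ p ∈ Ω, 0 ≤ fderiv ℝ φ p p) (u : E) :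
    MonotoneOn (fun r => φ (exp r • u)) {r : ℝ | exp r • u ∈ Ω} := by
  have hd : ∀ r ∈ {r : ℝ | exp r • u ∈ Ω}, HasDerivAt (fun r => φ (exp r • u))
      (fderiv ℝ φ (exp r • u) (exp r • u)) r := fun r hr =>
    hasDerivAt_exp_smul (hφ.differentiableAt (hΩ.mem_nhds hr))
  exact monotoneOn_of_hasDerivWithinAt_nonneg (ordConnected_setOf_exp_smul_mem hΩ₀ u).convex
    (fun r hr => (hd r hr).continuousAt.continuousWithinAt)
    (fun r hr => (hd r (interior_subset hr)).hasDerivWithinAt)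
    (fun r hr => hstar (exp r • u) (interior_subset (s := {r : ℝ | exp r • u ∈ Ω}) hr))

lemma fderiv_apply_self_eq_zero_of_exp_smul_eq (hΩ : IsOpen Ω) (hΩ₀ : StarConvex ℝ 0 Ω)
    (hφ : DifferentiableOn ℝ φ Ω) (hstar : ∀ p ∈ Ω, 0 ≤ fderiv ℝ φ p p) {u : E} {r s : ℝ}
    (hr : exp r • u ∈ Ω) (hs : exp s • u ∈ Ω) (hrs : r ≠ s)
    (heq : φ (exp r • u) = φ (exp s • u)) : fderiv ℝ φ (exp r • u) (exp r • u) = 0 :=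
  have hsub : uIcc r s ⊆ {r : ℝ | exp r • u ∈ Ω} :=
    (ordConnected_setOf_exp_smul_mem hΩ₀ u).uIcc_subset hr hs
  eq_zero_of_hasDerivAt_of_monotoneOn_uIcc
    ((monotoneOn_exp_smul hΩ hΩ₀ hφ hstar u).mono hsub) hrs heq
    (hasDerivAt_exp_smul (hφ.differentiableAt (hΩ.mem_nhds hr)))

end Ray

/-- The areal velocity `y ẋ - x ẏ` of (S): the squared radius times the clockwise angular
speed. -/
def arealVelocity (φ : ℝ × ℝ → ℝ) (p : ℝ × ℝ) : ℝ :=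
  p.1 ^ 2 + p.2 ^ 2 + p.1 * p.2 * φ p

/-- The divergence of the vector field `phiVF φ`, for `φ` differentiable at `p`. -/
def phiDiv (φ : ℝ × ℝ → ℝ) (p : ℝ × ℝ) : ℝ :=
  -φ p - p.2 * fderiv ℝ φ p (0, 1)

section Solution

variable {φ : ℝ × ℝ → ℝ} {γ : ℝ → ℝ × ℝ} {t : ℝ}

lemma hasDerivAt_fst_of_phiVF (hγ : HasDerivAt γ (phiVF φ (γ t)) t) :
    HasDerivAt (fun t => (γ t).1) (γ t).2 t :=
  (ContinuousLinearMap.fst ℝ ℝ ℝ).hasFDerivAt.comp_hasDerivAt t hγ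

lemma hasDerivAt_snd_of_phiVF (hγ : HasDerivAt γ (phiVF φ (γ t)) t) :
    HasDerivAt (fun t => (γ t).2) (-(γ t).1 - (γ t).2 * φ (γ t)) t :=
  (ContinuousLinearMap.snd ℝ ℝ ℝ).hasFDerivAt.comp_hasDerivAt t hγ

lemma hasDerivAt_sq_add_sq (hγ : HasDerivAt γ (phiVF φ (γ t)) t) :
    HasDerivAt (fun t => (γ t).1 ^ 2 + (γ t).2 ^ 2) (-2 * (γ t).2 ^ 2 * φ (γ t)) t := by
  refine (((hasDerivAt_fst_of_phiVF hγ).fun_pow 2).fun_add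
    ((hasDerivAt_snd_of_phiVF hγ).fun_pow 2)).congr_deriv ?_
  push_cast
  ring

lemma hasDerivAt_arealVelocity (hγ : HasDerivAt γ (phiVF φ (γ t)) t)
    (hφ : DifferentiableAt ℝ φ (γ t)) :
    HasDerivAt (fun t => arealVelocity φ (γ t))
      (phiDiv φ (γ t) * arealVelocity φ (γ t) + (γ t).2 ^ 2 * fderiv ℝ φ (γ t) (γ t)) t := by
  have hφγ : HasDerivAt (fun t => φ (γ t)) (fderiv ℝ φ (γ t) (phiVF φ (γ t))) t :=
    hφ.hasFDerivAt.comp_hasDerivAt t hγ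
  refine ((hasDerivAt_sq_add_sq hγ).fun_add (((hasDerivAt_fst_of_phiVF hγ).fun_mul
    (hasDerivAt_snd_of_phiVF hγ)).fun_mul hφγ)).congr_deriv ?_
  rw [← mul_apply_add_mul_apply_eq _ (γ t), ← mul_apply_add_mul_apply_eq _ (phiVF φ (γ t))]
  simp only [phiDiv, arealVelocity, phiVF]
  ring

end Solution

lemma sq_add_sq_pos_iff {p : ℝ × ℝ} : 0 < p.1 ^ 2 + p.2 ^ 2 ↔ p ≠ 0 := by
  rw [Ne, Prod.ext_iff, (by positivity : 0 ≤ p.1 ^ 2 + p.2 ^ 2).lt_iff_ne', Ne,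
    add_eq_zero_iff_of_nonneg (sq_nonneg _) (sq_nonneg _)]
  simp

namespace IsCycle

variable {F : ℝ × ℝ → ℝ × ℝ} {γ : ℝ → ℝ × ℝ} {T : ℝ}

lemma hasDerivAt (hγ : IsCycle F γ T) (t : ℝ) : HasDerivAt γ (F (γ t)) t := hγ.1 t

lemma period_pos (hγ : IsCycle F γ T) : 0 < T := hγ.2.1

lemma periodic (hγ : IsCycle F γ T) : Function.Periodic γ T := hγ.2.2.1

lemma continuous (hγ : IsCycle F γ T) : Continuous γ :=
  continuous_of_forall_hasDerivAt hγ.hasDerivAt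

lemma exists_notMem_of_not_hasSemiOrbitIn (hγ : IsCycle F γ T) {Z : Set (ℝ × ℝ)}
    (hZ : ¬HasSemiOrbitIn F Z) : ∃ t, γ t ∉ Z := by
  by_contra! hmem
  obtain ⟨t₁, t₂, hne⟩ := hγ.2.2.2
  obtain ⟨s₁, hs₁, hts₁⟩ := hγ.periodic.exists_mem_Ico₀ hγ.period_pos t₁
  obtain ⟨s₂, hs₂, hts₂⟩ := hγ.periodic.exists_mem_Ico₀ hγ.period_pos t₂
  refine hZ ⟨γ, 0, fun t _ => hγ.hasDerivAt t, ⟨s₁, hs₁.1, s₂, hs₂.1, ?_⟩, ?_⟩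
  · rwa [← hts₁, ← hts₂]
  · exact image_subset_iff.2 fun t _ => hmem t

variable {φ : ℝ × ℝ → ℝ}

lemma continuous_comp (hγ : IsCycle F γ T) (hφ : ∀ t, ContDiffAt ℝ 1 φ (γ t)) :
    Continuous fun t => φ (γ t) :=
  continuous_iff_continuousAt.2 fun t =>
    (hφ t).continuousAt.comp hγ.continuous.continuousAt

lemma continuous_fderiv_comp (hγ : IsCycle F γ T) (hφ : ∀ t, ContDiffAt ℝ 1 φ (γ t)) :
    Continuous fun t => fderiv ℝ φ (γ t) :=
  continuous_iff_continuousAt.2 fun t =>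
    ((hφ t).continuousAt_fderiv one_ne_zero).comp hγ.continuous.continuousAt

lemma continuous_phiDiv (hγ : IsCycle F γ T) (hφ : ∀ t, ContDiffAt ℝ 1 φ (γ t)) :
    Continuous fun t => phiDiv φ (γ t) :=
  (hγ.continuous_comp hφ).neg.sub
    (hγ.continuous.snd.mul ((hγ.continuous_fderiv_comp hφ).clm_apply continuous_const))

lemma ne_zero (hγ : IsCycle (phiVF φ) γ T) (hφ : Continuous fun t => φ (γ t)) (t : ℝ) :
    γ t ≠ 0 := by
  rw [← sq_add_sq_pos_iff]
  refine pos_of_periodic_of_mul_le_deriv (w := fun t => (γ t).1 ^ 2 + (γ t).2 ^ 2)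
    (c := fun t => -(2 * |φ (γ t)|)) hγ.period_pos
    (continuous_const.mul hφ.abs).neg (fun t => hasDerivAt_sq_add_sq (hγ.hasDerivAt t))
    (fun t => ?_) (hγ.periodic.comp fun p => p.1 ^ 2 + p.2 ^ 2) ?_ t
  · have hx : 0 ≤ |φ (γ t)| * (γ t).1 ^ 2 := by positivity
    have hy : (γ t).2 ^ 2 * φ (γ t) ≤ (γ t).2 ^ 2 * |φ (γ t)| :=
      mul_le_mul_of_nonneg_left (le_abs_self _) (sq_nonneg _)
    linarith
  · by_contra! hnonpos
    obtain ⟨t₁, t₂, hne⟩ := hγ.2.2.2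
    have hzero (t : ℝ) : γ t = 0 := by_contra fun h => (hnonpos t).not_gt (sq_add_sq_pos_iff.2 h)
    exact hne ((hzero t₁).trans (hzero t₂).symm)

lemma exists_snd_eq_zero (hγ : IsCycle (phiVF φ) γ T) : ∃ t, (γ t).2 = 0 := by
  obtain ⟨t, -, ht⟩ := exists_hasDerivAt_eq_zero hγ.period_pos hγ.continuous.fst.continuousOn
    (congrArg Prod.fst hγ.periodic.eq.symm) fun t _ => hasDerivAt_fst_of_phiVF (hγ.hasDerivAt t)
  exact ⟨t, ht⟩

lemma arealVelocity_pos (hγ : IsCycle (phiVF φ) γ T) (hφ : ∀ t, ContDiffAt ℝ 1 φ (γ t))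
    (hstar : ∀ t, 0 ≤ fderiv ℝ φ (γ t) (γ t)) (t : ℝ) : 0 < arealVelocity φ (γ t) := by
  refine pos_of_periodic_of_mul_le_deriv hγ.period_pos (hγ.continuous_phiDiv hφ)
    (fun t => hasDerivAt_arealVelocity (hγ.hasDerivAt t) ((hφ t).differentiableAt one_ne_zero))
    (fun t => le_add_of_nonneg_right (mul_nonneg (sq_nonneg _) (hstar t)))
    (hγ.periodic.comp (arealVelocity φ)) ?_ t
  obtain ⟨t₀, ht₀⟩ := hγ.exists_snd_eq_zero
  have hV := sq_add_sq_pos_iff.2 (hγ.ne_zero (hγ.continuous_comp hφ) t₀)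
  exact ⟨t₀, by simpa [arealVelocity, ht₀] using hV⟩

lemma exists_snd_ne_zero_and_pos (hγ : IsCycle (phiVF φ) γ T)
    (hφ : ∀ t, ContDiffAt ℝ 1 φ (γ t)) (hstar : ∀ t, 0 ≤ fderiv ℝ φ (γ t) (γ t))
    (hne : ∃ t, fderiv ℝ φ (γ t) (γ t) ≠ 0) :
    ∃ t, (γ t).2 ≠ 0 ∧ 0 < fderiv ℝ φ (γ t) (γ t) := by
  by_contra! hnonpos
  obtain ⟨t₀, ht₀⟩ := hne
  have hpos : ∀ᶠ t in 𝓝 t₀, 0 < fderiv ℝ φ (γ t) (γ t) :=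
    ((hγ.continuous_fderiv_comp hφ).clm_apply hγ.continuous).continuousAt.eventually_const_lt
      ((hstar t₀).lt_of_ne' ht₀)
  have hsnd : (fun t => (γ t).2) =ᶠ[𝓝 t₀] fun _ => 0 :=
    hpos.mono fun t ht => by_contra fun h => (hnonpos t h).not_gt ht
  have hderiv : -(γ t₀).1 - (γ t₀).2 * φ (γ t₀) = 0 :=
    (hasDerivAt_snd_of_phiVF (hγ.hasDerivAt t₀)).unique
      ((hasDerivAt_const t₀ 0).congr_of_eventuallyEq hsnd)
  have hsnd₀ : (γ t₀).2 = 0 := hsnd.self_of_nhds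
  exact hγ.ne_zero (hγ.continuous_comp hφ) t₀
    (Prod.ext (by simpa [hsnd₀] using hderiv) hsnd₀)

lemma integral_phiDiv_neg (hγ : IsCycle (phiVF φ) γ T) (hφ : ∀ t, ContDiffAt ℝ 1 φ (γ t))
    (hstar : ∀ t, 0 ≤ fderiv ℝ φ (γ t) (γ t)) (hne : ∃ t, fderiv ℝ φ (γ t) (γ t) ≠ 0) :
    ∫ t in (0 : ℝ)..T, phiDiv φ (γ t) < 0 := by
  have hW := hγ.arealVelocity_pos hφ hstar
  have hWderiv (t : ℝ) := hasDerivAt_arealVelocity (hγ.hasDerivAt t)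
    ((hφ t).differentiableAt one_ne_zero)
  let g : ℝ × ℝ → ℝ := fun p => p.2 ^ 2 * fderiv ℝ φ p p / arealVelocity φ p
  have hg : Continuous fun t => g (γ t) :=
    ((hγ.continuous.snd.pow 2).mul
      ((hγ.continuous_fderiv_comp hφ).clm_apply hγ.continuous)).div
      (continuous_of_forall_hasDerivAt hWderiv) fun t => (hW t).ne'
  have hlog (t : ℝ) : HasDerivAt (fun t => log (arealVelocity φ (γ t)))
      (phiDiv φ (γ t) + g (γ t)) t := by
    have h := (hWderiv t).log (hW t).ne'
    rwa [add_div, mul_div_cancel_right₀ _ (hW t).ne'] at h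
  have hdiv_int := (hγ.continuous_phiDiv hφ).intervalIntegrable (μ := MeasureTheory.volume) 0 T
  have hg_int := hg.intervalIntegrable (μ := MeasureTheory.volume) 0 T
  have hsum : (∫ t in (0 : ℝ)..T, phiDiv φ (γ t)) + ∫ t in (0 : ℝ)..T, g (γ t) = 0 := by
    rw [← integral_add hdiv_int hg_int, integral_eq_sub_of_hasDerivAt (fun t _ => hlog t)
      (hdiv_int.add hg_int), hγ.periodic.eq, sub_self]
  have hg_pos : 0 < ∫ t in (0 : ℝ)..T, g (γ t) := by
    obtain ⟨t, ht, ht'⟩ := hγ.exists_snd_ne_zero_and_pos hφ hstar hne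
    obtain ⟨s, hs, hts⟩ := hγ.periodic.exists_mem_Ico₀ hγ.period_pos t
    refine integral_pos hγ.period_pos hg.continuousOn (fun t _ => ?_)
      ⟨s, Ico_subset_Icc_self hs, ?_⟩
    · exact div_nonneg (mul_nonneg (sq_nonneg _) (hstar t)) (hW t).le
    · rw [← hts]
      exact div_pos (mul_pos (by positivity) ht') (hW t)
  linarith

end IsCycle

/-- The point with logarithmic radius `r` and clockwise angle `θ`, the sense in which
the cycles of (S) turn. -/
def polarPt (r θ : ℝ) : ℝ × ℝ :=
  exp r • (cos θ, -sin θ)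

/-- The slope `dr/dθ` of the orbit of (S) through `p` in the coordinates of `polarPt`. -/
def polarSlope (φ : ℝ × ℝ → ℝ) (p : ℝ × ℝ) : ℝ :=
  -(p.2 ^ 2 * φ p) / arealVelocity φ p

/-- The graph `r = ρ θ` is a closed curve solving the polar equation of (S), closing up after
finitely many turns. -/
structure IsPolarCycle (φ : ℝ × ℝ → ℝ) (ρ : ℝ → ℝ) : Prop where
  arealVelocity_pos : ∀ θ, 0 < arealVelocity φ (polarPt (ρ θ) θ)
  hasDerivAt : ∀ θ, HasDerivAt ρ (polarSlope φ (polarPt (ρ θ) θ)) θ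
  periodic : ∃ n : ℕ, 0 < n ∧ Function.Periodic ρ (n * (2 * π))

lemma polarPt_fst (r θ : ℝ) : (polarPt r θ).1 = exp r * cos θ := rfl

lemma polarPt_snd (r θ : ℝ) : (polarPt r θ).2 = -(exp r * sin θ) := mul_neg _ _

lemma polarPt_eq_conj_exp (r θ : ℝ) :
    polarPt r θ = ((Complex.exp ⟨r, θ⟩).re, -(Complex.exp ⟨r, θ⟩).im) :=
  Prod.ext (by simp [polarPt_fst, Complex.exp_re]) (by simp [polarPt_snd, Complex.exp_im])

lemma eq_and_exists_int_of_polarPt_eq {r r' θ θ' : ℝ} (h : polarPt r θ = polarPt r' θ') :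
    r = r' ∧ ∃ n : ℤ, θ = θ' + n * (2 * π) := by
  rw [polarPt_eq_conj_exp, polarPt_eq_conj_exp, Prod.ext_iff, neg_inj, ← Complex.ext_iff,
    Complex.exp_eq_exp_iff_exists_int] at h
  obtain ⟨n, hn⟩ := h
  exact ⟨by simpa using congrArg Complex.re hn, n, by simpa using congrArg Complex.im hn⟩

lemma arealVelocity_polarPt (φ : ℝ × ℝ → ℝ) (r θ : ℝ) : arealVelocity φ (polarPt r θ) =
    exp r ^ 2 * (1 - sin θ * cos θ * φ (polarPt r θ)) := by
  rw [arealVelocity, polarPt_fst, polarPt_snd]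
  linear_combination exp r ^ 2 * sin_sq_add_cos_sq θ

lemma polarSlope_sub_polarSlope {φ : ℝ × ℝ → ℝ} {r s θ : ℝ}
    (hr : arealVelocity φ (polarPt r θ) ≠ 0) (hs : arealVelocity φ (polarPt s θ) ≠ 0) :
    polarSlope φ (polarPt r θ) - polarSlope φ (polarPt s θ) =
      -((exp s * (polarPt r θ).2) ^ 2 /
        (arealVelocity φ (polarPt r θ) * arealVelocity φ (polarPt s θ)) *
        (φ (polarPt r θ) - φ (polarPt s θ))) := by
  rw [polarSlope, polarSlope, div_sub_div _ _ hr hs, div_mul_eq_mul_div, ← neg_div]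
  congr 1
  rw [arealVelocity_polarPt, arealVelocity_polarPt, polarPt_snd, polarPt_snd]
  ring

lemma exists_polar_lift {φ : ℝ × ℝ → ℝ} {γ : ℝ → ℝ × ℝ}
    (hγ : ∀ t, HasDerivAt γ (phiVF φ (γ t)) t) (hφ : Continuous fun t => φ (γ t))
    (hne : ∀ t, γ t ≠ 0) :
    ∃ r θ : ℝ → ℝ, (∀ t, γ t = polarPt (r t) (θ t)) ∧
      (∀ t, HasDerivAt r (-((γ t).2 ^ 2 * φ (γ t)) / ((γ t).1 ^ 2 + (γ t).2 ^ 2)) t) ∧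
      ∀ t, HasDerivAt θ (arealVelocity φ (γ t) / ((γ t).1 ^ 2 + (γ t).2 ^ 2)) t := by
  have hcont : Continuous γ := continuous_of_forall_hasDerivAt hγ
  let z : ℝ → ℂ := fun t => (γ t).1 - (γ t).2 * Complex.I
  let z' : ℝ → ℂ := fun t => (γ t).2 + ((γ t).1 + (γ t).2 * φ (γ t)) * Complex.I
  have hz (t : ℝ) : HasDerivAt z (z' t) t := by
    refine ((hasDerivAt_fst_of_phiVF (hγ t)).ofReal_comp.fun_sub
      ((hasDerivAt_snd_of_phiVF (hγ t)).ofReal_comp.mul_const Complex.I)).congr_deriv ?_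
    simp only [z']
    push_cast
    ring
  have hz' : Continuous z' := by
    have hfst := Complex.continuous_ofReal.comp hcont.fst
    have hsnd := Complex.continuous_ofReal.comp hcont.snd
    exact hsnd.add ((hfst.add (hsnd.mul (Complex.continuous_ofReal.comp hφ))).mul continuous_const)
  have hz₀ (t : ℝ) : z t ≠ 0 := fun h =>
    hne t (Prod.ext (by simpa [z] using congrArg Complex.re h)
      (by simpa [z] using congrArg Complex.im h))
  obtain ⟨ℓ, hℓ, hexp⟩ := exists_complex_log_lift hz hz' hz₀
  have hquot (t : ℝ) : z' t / z t =
      ⟨-((γ t).2 ^ 2 * φ (γ t)) / ((γ t).1 ^ 2 + (γ t).2 ^ 2),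
        arealVelocity φ (γ t) / ((γ t).1 ^ 2 + (γ t).2 ^ 2)⟩ := by
    have hV := (sq_add_sq_pos_iff.2 (hne t)).ne'
    rw [div_eq_iff (hz₀ t)]
    apply Complex.ext <;> simp [z, z', arealVelocity] <;> field_simp <;> ring
  simp only [hquot] at hℓ
  refine ⟨fun t => (ℓ t).re, fun t => (ℓ t).im, fun t => ?_,
    fun t => Complex.reCLM.hasFDerivAt.comp_hasDerivAt t (hℓ t),
    fun t => Complex.imCLM.hasFDerivAt.comp_hasDerivAt t (hℓ t)⟩
  rw [polarPt_eq_conj_exp, Complex.eta, hexp]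
  simp [z]

namespace IsCycle

variable {φ : ℝ × ℝ → ℝ} {γ : ℝ → ℝ × ℝ} {T : ℝ}

lemma exists_angle_add_period {F : ℝ × ℝ → ℝ × ℝ} {r ϑ : ℝ → ℝ} {ω : ℝ × ℝ → ℝ}
    (hγ : IsCycle F γ T) (hpolar : ∀ t, γ t = polarPt (r t) (ϑ t))
    (hϑ : ∀ t, HasDerivAt ϑ (ω (γ t)) t) (hω : ∀ t, 0 < ω (γ t)) :
    ∃ n : ℕ, 0 < n ∧ ∀ t, ϑ (t + T) = ϑ t + n * (2 * π) := by
  obtain ⟨-, n, hn⟩ := eq_and_exists_int_of_polarPt_eq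
    ((hpolar T).symm.trans (hγ.periodic.eq.trans (hpolar 0)))
  have hn_pos : 0 < n := by
    have hlt := strictMono_of_hasDerivAt_pos hϑ hω hγ.period_pos
    rw [hn] at hlt
    exact_mod_cast pos_of_mul_pos_left (pos_of_lt_add_right hlt) two_pi_pos.le
  lift n to ℕ using hn_pos.le
  refine ⟨n, mod_cast hn_pos, fun t => ?_⟩
  rw [map_add_period_of_periodic_deriv hϑ (hγ.periodic.comp ω), hn, add_sub_cancel_left,
    Int.cast_natCast]

lemma exists_isPolarCycle (hγ : IsCycle (phiVF φ) γ T) (hφ : Continuous fun t => φ (γ t))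
    (hW : ∀ t, 0 < arealVelocity φ (γ t)) :
    ∃ ρ, IsPolarCycle φ ρ ∧ range γ = range fun θ => polarPt (ρ θ) θ := by
  obtain ⟨r, ϑ, hpolar, hr, hϑ⟩ := exists_polar_lift hγ.hasDerivAt hφ (hγ.ne_zero hφ)
  have hV (t : ℝ) := sq_add_sq_pos_iff.2 (hγ.ne_zero hφ t)
  have hspeed (t : ℝ) := div_pos (hW t) (hV t)
  have hr_per (t : ℝ) : r (t + T) = r t := (eq_and_exists_int_of_polarPt_eq
    ((hpolar (t + T)).symm.trans ((hγ.periodic t).trans (hpolar t)))).1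
  obtain ⟨n, hn, hturn⟩ := hγ.exists_angle_add_period
    (ω := fun p => arealVelocity φ p / (p.1 ^ 2 + p.2 ^ 2)) hpolar hϑ hspeed
  obtain ⟨τ, hτϑ, hϑτ, hτ⟩ := exists_inverse_hasDerivAt hϑ hspeed
    (surjective_of_map_add_const (continuous_of_forall_hasDerivAt hϑ) (by positivity) hturn)
  have hgraph (θ : ℝ) : γ (τ θ) = polarPt (r (τ θ)) θ := by rw [hpolar, hϑτ]
  refine ⟨fun θ => r (τ θ), ⟨fun θ => ?_, fun θ => ?_, n, hn, fun θ => ?_⟩, ?_⟩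
  · exact hgraph θ ▸ hW (τ θ)
  · refine ((hr (τ θ)).comp θ (hτ θ)).congr_deriv ?_
    rw [← hgraph, polarSlope, inv_div, div_mul_div_cancel₀ (hV _).ne']
  · have hshift : τ (θ + n * (2 * π)) = τ θ + T := by rw [← hτϑ (τ θ + T), hturn, hϑτ]
    exact (congrArg r hshift).trans (hr_per (τ θ))
  · rw [← hτϑ.surjective.range_comp γ]
    exact congrArg range (funext hgraph)

end IsCycle

namespace IsPolarCycle

variable {φ : ℝ × ℝ → ℝ} {ρ₁ ρ₂ : ℝ → ℝ}

lemma exists_common_period (h₁ : IsPolarCycle φ ρ₁) (h₂ : IsPolarCycle φ ρ₂) :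
    ∃ c, 0 < c ∧ Function.Periodic ρ₁ c ∧ Function.Periodic ρ₂ c := by
  obtain ⟨m, hm, hper₁⟩ := h₁.periodic
  obtain ⟨n, hn, hper₂⟩ := h₂.periodic
  refine ⟨n * (m * (2 * π)), by positivity, hper₁.nat_mul n, ?_⟩
  rw [mul_left_comm]
  exact hper₂.nat_mul m

lemma hasDerivAt_sub_sq (h₁ : IsPolarCycle φ ρ₁) (h₂ : IsPolarCycle φ ρ₂) (θ : ℝ) :
    HasDerivAt (fun θ => (ρ₁ θ - ρ₂ θ) ^ 2)
      (-(2 * ((exp (ρ₂ θ) * (polarPt (ρ₁ θ) θ).2) ^ 2 /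
        (arealVelocity φ (polarPt (ρ₁ θ) θ) * arealVelocity φ (polarPt (ρ₂ θ) θ))) *
        ((ρ₁ θ - ρ₂ θ) * (φ (polarPt (ρ₁ θ) θ) - φ (polarPt (ρ₂ θ) θ))))) θ := by
  refine (((h₁.hasDerivAt θ).fun_sub (h₂.hasDerivAt θ)).fun_pow 2).congr_deriv ?_
  rw [polarSlope_sub_polarSlope (h₁.arealVelocity_pos θ).ne' (h₂.arealVelocity_pos θ).ne']
  push_cast
  ring

lemma sub_sq_eq_sub_sq (h₁ : IsPolarCycle φ ρ₁) (h₂ : IsPolarCycle φ ρ₂)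
    (hmono : ∀ θ, 0 ≤ (ρ₁ θ - ρ₂ θ) * (φ (polarPt (ρ₁ θ) θ) - φ (polarPt (ρ₂ θ) θ)))
    (θ θ' : ℝ) : (ρ₁ θ - ρ₂ θ) ^ 2 = (ρ₁ θ' - ρ₂ θ') ^ 2 := by
  obtain ⟨c, hc, hper₁, hper₂⟩ := h₁.exists_common_period h₂
  refine eq_of_antitone_of_periodic (f := fun θ => (ρ₁ θ - ρ₂ θ) ^ 2)
    (antitone_of_hasDerivAt_nonpos (h₁.hasDerivAt_sub_sq h₂) fun θ => ?_)
    (fun θ => by simp only [hper₁ θ, hper₂ θ]) hc θ θ'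
  have hW₁ := h₁.arealVelocity_pos θ
  have hW₂ := h₂.arealVelocity_pos θ
  exact neg_nonpos.2 (mul_nonneg (by positivity) (hmono θ))

lemma eq_of_exists_angle (h₁ : IsPolarCycle φ ρ₁) (h₂ : IsPolarCycle φ ρ₂)
    (hmono : ∀ θ, 0 ≤ (ρ₁ θ - ρ₂ θ) * (φ (polarPt (ρ₁ θ) θ) - φ (polarPt (ρ₂ θ) θ)))
    (hinj : ∃ θ, (polarPt (ρ₁ θ) θ).2 ≠ 0 ∧
      (φ (polarPt (ρ₁ θ) θ) = φ (polarPt (ρ₂ θ) θ) → ρ₁ θ = ρ₂ θ)) : ρ₁ = ρ₂ := by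
  obtain ⟨θ, hsnd, hinj⟩ := hinj
  have hconst := h₁.sub_sq_eq_sub_sq h₂ hmono
  have hderiv := (h₁.hasDerivAt_sub_sq h₂ θ).unique
    ((hasDerivAt_const θ _).congr_of_eventuallyEq (.of_forall fun θ' => hconst θ' θ))
  have hW₁ := (h₁.arealVelocity_pos θ).ne'
  have hW₂ := (h₂.arealVelocity_pos θ).ne'
  have hθ : ρ₁ θ - ρ₂ θ = 0 := by
    have hprod : ρ₁ θ - ρ₂ θ = 0 ∨ φ (polarPt (ρ₁ θ) θ) - φ (polarPt (ρ₂ θ) θ) = 0 := by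
      simpa [hsnd, hW₁, hW₂] using hderiv
    exact hprod.elim id fun h => sub_eq_zero.2 (hinj (sub_eq_zero.1 h))
  funext θ'
  have h := hconst θ' θ
  rw [hθ, zero_pow two_ne_zero, sq_eq_zero_iff] at h
  exact sub_eq_zero.1 h

end IsPolarCycle

section StarShaped

variable {Ω : Set (ℝ × ℝ)} {φ : ℝ × ℝ → ℝ}

lemma IsPolarCycle.eq_of_starShaped (hΩ : IsOpen Ω) (hΩ₀ : StarConvex ℝ 0 Ω)
    (hφ : DifferentiableOn ℝ φ Ω) (hstar : ∀ p ∈ Ω, 0 ≤ fderiv ℝ φ p p) {ρ₁ ρ₂ : ℝ → ℝ}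
    (h₁ : IsPolarCycle φ ρ₁) (h₂ : IsPolarCycle φ ρ₂)
    (hmem₁ : ∀ θ, polarPt (ρ₁ θ) θ ∈ Ω) (hmem₂ : ∀ θ, polarPt (ρ₂ θ) θ ∈ Ω)
    (hpos : ∃ θ, (polarPt (ρ₁ θ) θ).2 ≠ 0 ∧
      0 < fderiv ℝ φ (polarPt (ρ₁ θ) θ) (polarPt (ρ₁ θ) θ)) : ρ₁ = ρ₂ := by
  refine h₁.eq_of_exists_angle h₂ (fun θ => ?_) ?_
  · have hmono := monovaryOn_id_iff.2 (monotoneOn_exp_smul hΩ hΩ₀ hφ hstar (cos θ, -sin θ))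
    rw [mul_comm]
    exact monovaryOn_iff_forall_mul_nonneg.1 hmono (hmem₂ θ) (hmem₁ θ)
  · obtain ⟨θ, hsnd, hpos⟩ := hpos
    refine ⟨θ, hsnd, fun heq => by_contra fun hne => hpos.ne' ?_⟩
    exact fderiv_apply_self_eq_zero_of_exp_smul_eq hΩ hΩ₀ hφ hstar (hmem₁ θ) (hmem₂ θ) hne heq

theorem IsCycle.range_eq_of_starShaped (hΩ : IsOpen Ω) (hΩ₀ : StarConvex ℝ 0 Ω)
    (hφ : ContDiffOn ℝ 1 φ Ω) (hstar : ∀ p ∈ Ω, 0 ≤ fderiv ℝ φ p p)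
    {γ₁ γ₂ : ℝ → ℝ × ℝ} {T₁ T₂ : ℝ} (hγ₁ : IsCycle (phiVF φ) γ₁ T₁)
    (hγ₂ : IsCycle (phiVF φ) γ₂ T₂) (hmem₁ : ∀ t, γ₁ t ∈ Ω) (hmem₂ : ∀ t, γ₂ t ∈ Ω)
    (hne : ∃ t, fderiv ℝ φ (γ₁ t) (γ₁ t) ≠ 0) : range γ₁ = range γ₂ := by
  have hφ' : ∀ p ∈ Ω, ContDiffAt ℝ 1 φ p := fun p hp => hφ.contDiffAt (hΩ.mem_nhds hp)
  have hφ₁ (t : ℝ) := hφ' _ (hmem₁ t)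
  have hφ₂ (t : ℝ) := hφ' _ (hmem₂ t)
  have hstar₁ (t : ℝ) := hstar _ (hmem₁ t)
  obtain ⟨ρ₁, hρ₁, hrange₁⟩ := hγ₁.exists_isPolarCycle (hγ₁.continuous_comp hφ₁)
    (hγ₁.arealVelocity_pos hφ₁ hstar₁)
  obtain ⟨ρ₂, hρ₂, hrange₂⟩ := hγ₂.exists_isPolarCycle (hγ₂.continuous_comp hφ₂)
    (hγ₂.arealVelocity_pos hφ₂ fun t => hstar _ (hmem₂ t))
  obtain ⟨t, hpos⟩ := hγ₁.exists_snd_ne_zero_and_pos hφ₁ hstar₁ hne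
  obtain ⟨θ, hθ⟩ : γ₁ t ∈ range fun θ => polarPt (ρ₁ θ) θ := hrange₁ ▸ mem_range_self t
  rw [← range_subset_iff, hrange₁, range_subset_iff] at hmem₁
  rw [← range_subset_iff, hrange₂, range_subset_iff] at hmem₂
  rw [hrange₁, hrange₂, hρ₁.eq_of_starShaped hΩ hΩ₀ (hφ.differentiableOn one_ne_zero) hstar hρ₂
    hmem₁ hmem₂ ⟨θ, by rwa [← hθ] at hpos⟩]

end StarShaped

theorem statement1_general {Ω : Set (ℝ × ℝ)} (hΩ : IsOpen Ω) (hΩ₀ : StarConvex ℝ 0 Ω)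
    {φ : ℝ × ℝ → ℝ} (hφ : ContDiffOn ℝ 1 φ Ω) (hstar : ∀ p ∈ Ω, 0 ≤ fderiv ℝ φ p p)
    (hZ : ¬HasSemiOrbitIn (phiVF φ) {p ∈ Ω | fderiv ℝ φ p p = 0}) :
    (∀ (γ₁ : ℝ → ℝ × ℝ) (T₁ : ℝ) (γ₂ : ℝ → ℝ × ℝ) (T₂ : ℝ),
        IsCycle (phiVF φ) γ₁ T₁ → range γ₁ ⊆ Ω →
        IsCycle (phiVF φ) γ₂ T₂ → range γ₂ ⊆ Ω → range γ₁ = range γ₂) ∧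
    ∀ (μ : ℝ → ℝ × ℝ) (T : ℝ), IsCycle (phiVF φ) μ T → range μ ⊆ Ω →
      ∫ t in (0 : ℝ)..T, phiDiv φ (μ t) < 0 := by
  have hne {γ : ℝ → ℝ × ℝ} {T : ℝ} (hγ : IsCycle (phiVF φ) γ T) (hmem : ∀ t, γ t ∈ Ω) :
      ∃ t, fderiv ℝ φ (γ t) (γ t) ≠ 0 :=
    (hγ.exists_notMem_of_not_hasSemiOrbitIn hZ).imp fun t ht h => ht ⟨hmem t, h⟩
  simp only [range_subset_iff]
  refine ⟨fun γ₁ T₁ γ₂ T₂ hγ₁ hmem₁ hγ₂ hmem₂ => ?_, fun μ T hμ hmem => ?_⟩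
  · exact hγ₁.range_eq_of_starShaped hΩ hΩ₀ hφ hstar hγ₂ hmem₁ hmem₂ (hne hγ₁ hmem₁)
  · exact hμ.integral_phiDiv_neg (fun t => hφ.contDiffAt (hΩ.mem_nhds (hmem t)))
      (fun t => hstar _ (hmem t)) (hne hμ hmem)

lemma starConvex_strip {a b : ℝ} (ha : a < 0) (hb : 0 < b) :
    StarConvex ℝ 0 (Ioo a b ×ˢ (univ : Set ℝ)) :=
  ((convex_Ioo a b).prod convex_univ).starConvex ⟨⟨ha, hb⟩, mem_univ _⟩

/-- on the strip `Ω = (a,b) × ℝ`, if `φ` is star-shaped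
(`x φ_x + y φ_y ≥ 0`) and the set where `x φ_x + y φ_y = 0` contains no
non-trivial positive semi-orbit of (S), then (S) has at most one limit cycle in
`Ω`, and any such limit cycle satisfies `∫₀ᵀ div < 0` (hence is hyperbolic). -/
theorem statement1 (a b : ℝ) (ha : a < 0) (hb : 0 < b) (φ : ℝ × ℝ → ℝ)
    (hφ : ContDiffOn ℝ 1 φ (Ioo a b ×ˢ (univ : Set ℝ)))
    (hstar : ∀ p ∈ Ioo a b ×ˢ (univ : Set ℝ),
      p.1 * fderiv ℝ φ p (1, 0) + p.2 * fderiv ℝ φ p (0, 1) ≥ 0)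
    (hZ : ¬ HasSemiOrbitIn (phiVF φ)
      {p ∈ Ioo a b ×ˢ (univ : Set ℝ) |
        p.1 * fderiv ℝ φ p (1, 0) + p.2 * fderiv ℝ φ p (0, 1) = 0}) :
    (∀ (γ₁ : ℝ → ℝ × ℝ) (T₁ : ℝ) (γ₂ : ℝ → ℝ × ℝ) (T₂ : ℝ),
        IsLimitCycle (phiVF φ) γ₁ T₁ → range γ₁ ⊆ Ioo a b ×ˢ (univ : Set ℝ) →
        IsLimitCycle (phiVF φ) γ₂ T₂ → range γ₂ ⊆ Ioo a b ×ˢ (univ : Set ℝ) →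
        range γ₁ = range γ₂) ∧
    (∀ (μ : ℝ → ℝ × ℝ) (T : ℝ),
        IsLimitCycle (phiVF φ) μ T → range μ ⊆ Ioo a b ×ˢ (univ : Set ℝ) →
        (∫ t in (0:ℝ)..T,
          (-φ (μ t) - (μ t).2 * fderiv ℝ φ (μ t) (0, 1))) < 0) := by
  simp only [mul_apply_add_mul_apply_eq] at hstar hZ
  obtain ⟨huniq, hdiv⟩ := statement1_general (isOpen_Ioo.prod isOpen_univ)
    (starConvex_strip ha hb) hφ hstar hZ
  exact ⟨fun γ₁ T₁ γ₂ T₂ h₁ hΩ₁ h₂ hΩ₂ => huniq γ₁ T₁ γ₂ T₂ h₁.1 hΩ₁ h₂.1 hΩ₂,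
    fun μ T hμ hΩ => hdiv μ T hμ.1 hΩ⟩
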